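/- Let G be a finite simple connected graph and let S be a Carathéodory independent set of G with |S| ≥ 2. Then every vertex of S lies on some cycle of G. -/

import Mathlib

open SimpleGraph

/-- A set `S` is cycle convex in `G` if no vertex `w` outside `S` is such that the
subgraph induced by `S ∪ {w}` contains a cycle through `w`. -/
def IsCycleConvex {V : Type*} (G : SimpleGraph V) (S : Set V) : Prop :=
  ∀ w : V, w ∉ S →
    ¬ ∃ c : (G.induce (S ∪ {w})).Walk ⟨w, Set.mem_union_right S rfl⟩
        ⟨w, Set.mem_union_right S rfl⟩, c.IsCycle

/-- The cycle convex hull of `S`: the smallest cycle convex set containing `S`. -/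
def cycleHull {V : Type*} (G : SimpleGraph V) (S : Set V) : Set V :=
  ⋂₀ {T : Set V | S ⊆ T ∧ IsCycleConvex G T}

/-- `S` is Carathéodory independent in the cycle convexity of `G`. -/
def CIndep {V : Type*} (G : SimpleGraph V) (S : Set V) : Prop :=
  ∃ p ∈ cycleHull G S, ∀ a ∈ S, p ∉ cycleHull G (S \ {a})

/-- The Carathéodory number of `G` in the cycle convexity. -/
noncomputable def carNumber {V : Type*} (G : SimpleGraph V) : ℕ :=
  sSup {n : ℕ | ∃ S : Set V, CIndep G S ∧ S.ncard = n}

/-!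
A vertex `v` on no cycle takes no part in generating the convexity: adding `v` to a set adds only
`v` to its hull. Hence a point witnessing the Carathéodory independence of `S` could depend on such
a `v ∈ S` only by being `v` itself, and it would then survive the removal of any other element
of `S`.
-/

section

variable {V : Type*} {G : SimpleGraph V} {S T : Set V} {v : V}

theorem isCycleConvex_iff_forall_walk :
    IsCycleConvex G S ↔
      ∀ w, ∀ c : G.Walk w w, c.IsCycle → (∀ x ∈ c.support, x ≠ w → x ∈ S) → w ∈ S := by
  constructor
  · intro h w c hc hcS
    by_contra hw
    have hsupport : ∀ x ∈ c.support, x ∈ S ∪ {w} := fun x hx =>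
      or_iff_not_imp_right.2 (hcS x hx)
    refine h w hw ⟨c.induce _ hsupport, Walk.IsCycle.of_map (f := (Embedding.induce _).toHom) ?_⟩
    rwa [Walk.map_induce]
  · rintro h w hw ⟨c, hc⟩
    refine hw <| h w _ (hc.map (f := (Embedding.induce _).toHom) Subtype.val_injective) ?_
    intro x hx hxw
    obtain ⟨y, -, rfl⟩ := List.mem_map.1 (Walk.support_map _ c ▸ hx)
    exact y.2.resolve_right hxw

namespace IsCycleConvex

theorem sInter {𝒯 : Set (Set V)} (h𝒯 : ∀ T ∈ 𝒯, IsCycleConvex G T) :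
    IsCycleConvex G (⋂₀ 𝒯) :=
  isCycleConvex_iff_forall_walk.2 fun w c hc hsub T hT =>
    isCycleConvex_iff_forall_walk.1 (h𝒯 T hT) w c hc fun x hx hxw => hsub x hx hxw T hT

theorem insert_of_forall_not_isCycle (hT : IsCycleConvex G T)
    (hv : ∀ c : G.Walk v v, ¬ c.IsCycle) : IsCycleConvex G (insert v T) := by
  classical
  rw [isCycleConvex_iff_forall_walk] at hT ⊢
  intro w c hc hsub
  have hv_support : v ∉ c.support := fun hvc => hv _ (hc.rotate hvc)
  exact Or.inr <| hT w c hc fun x hx hxw =>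
    (hsub x hx hxw).resolve_left (ne_of_mem_of_not_mem hx hv_support)

end IsCycleConvex

theorem subset_cycleHull : S ⊆ cycleHull G S :=
  Set.subset_sInter fun _ hT => hT.1

theorem isCycleConvex_cycleHull : IsCycleConvex G (cycleHull G S) :=
  IsCycleConvex.sInter fun _ hT => hT.2

theorem cycleHull_subset_iff (hT : IsCycleConvex G T) : cycleHull G S ⊆ T ↔ S ⊆ T :=
  ⟨subset_cycleHull.trans, fun hST => Set.sInter_subset_of_mem ⟨hST, hT⟩⟩

theorem cycleHull_insert_of_forall_not_isCycle (hv : ∀ c : G.Walk v v, ¬ c.IsCycle) :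
    cycleHull G (insert v S) = insert v (cycleHull G S) := by
  refine Set.Subset.antisymm ?_ (Set.insert_subset ?_ ?_)
  · exact (cycleHull_subset_iff (isCycleConvex_cycleHull.insert_of_forall_not_isCycle hv)).2
      (Set.insert_subset_insert subset_cycleHull)
  · exact subset_cycleHull (Set.mem_insert v S)
  · exact (cycleHull_subset_iff isCycleConvex_cycleHull).2
      ((Set.subset_insert v S).trans subset_cycleHull)

theorem notMem_of_forall_notMem_cycleHull_sdiff_singleton {p : V} (hS : S.Nontrivial)
    (hp : ∀ a ∈ S, p ∉ cycleHull G (S \ {a})) : p ∉ S := by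
  intro hpS
  obtain ⟨a, haS, hap⟩ := hS.exists_ne p
  exact hp a haS (subset_cycleHull ⟨hpS, hap.symm⟩)

end

theorem stmt_1_general {V : Type*} {G : SimpleGraph V} {S : Set V} (hS : CIndep G S)
    (hnontrivial : S.Nontrivial) :
    ∀ v ∈ S, ∃ c : G.Walk v v, c.IsCycle := by
  intro v hvS
  by_contra! hv
  obtain ⟨p, hp, hindep⟩ := hS
  have hpS : p ∉ S := notMem_of_forall_notMem_cycleHull_sdiff_singleton hnontrivial hindep
  have hp_insert : p ∈ insert v (cycleHull G (S \ {v})) := by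
    rwa [← cycleHull_insert_of_forall_not_isCycle hv, Set.insert_sdiff_self_of_mem hvS]
  rcases hp_insert with rfl | hp_hull
  · exact hpS hvS
  · exact hindep v hvS hp_hull

/-- Lemma 1(b): every vertex of a Caratheodory independent set of size at least 2
lies on some cycle of the graph. -/
theorem stmt_1 {V : Type*} [Fintype V] (G : SimpleGraph V) (hG : G.Connected)
    (S : Set V) (hS : CIndep G S) (h2 : 2 ≤ S.ncard) :
    ∀ v ∈ S, ∃ c : G.Walk v v, c.IsCycle :=
  stmt_1_general hS (Set.one_lt_ncard_iff_nontrivial.1 h2)
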